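/- arXiv:2510.16839 — 2 statements merged into one kernel-verified Lean document; each statement's English description precedes it below -/
import Mathlib

section
/- Let Ψ be a digraphon on a probability space (Ξ,ξ) whose minimum outdegree is positive, i.e., ess inf_{x∈Ξ} ∫_Ξ Ψ(x,y) dξ(y) > 0. Then there exists k ≥ 2 such that the directed k-cycle density satisfies t(C_k,Ψ) > 0. -/
open MeasureTheory Filter Set Topology
open scoped ENNReal Real

namespace Digraphon

variable {Ω : Type*} [MeasurableSpace Ω]

/-- `kpowAux μ Γ n` is the `(n+1)`-st kernel power of `Γ`. -/
noncomputable def kpowAux (μ : Measure Ω) (Γ : Ω → Ω → ℝ) : ℕ → Ω → Ω → ℝ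
  | 0 => Γ
  | n + 1 => fun x y => ∫ z, Γ x z * kpowAux μ Γ n z y ∂μ

/-- `dpow μ Γ k` is the `k`-th kernel power of `Γ` (intended for `k ≥ 1`). -/
noncomputable def dpow (μ : Measure Ω) (Γ : Ω → Ω → ℝ) (k : ℕ) : Ω → Ω → ℝ :=
  kpowAux μ Γ (k - 1)

noncomputable def kpowAuxC (μ : Measure Ω) (Γ : Ω → Ω → ℂ) : ℕ → Ω → Ω → ℂ
  | 0 => Γ
  | n + 1 => fun x y => ∫ z, Γ x z * kpowAuxC μ Γ n z y ∂μ

noncomputable def dpowC (μ : Measure Ω) (Γ : Ω → Ω → ℂ) (k : ℕ) : Ω → Ω → ℂ :=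
  kpowAuxC μ Γ (k - 1)

/-- The set of points reachable from `x`. -/
def ReachOut (μ : Measure Ω) (Γ : Ω → Ω → ℝ) (x : Ω) : Set Ω :=
  {z | ∃ k : ℕ, 1 ≤ k ∧ 0 < dpow μ Γ k x z}

/-- The reachability sequence from `x` to `y`. -/
def reachSeq (μ : Measure Ω) (Γ : Ω → Ω → ℝ) (x y : Ω) : Set ℕ :=
  {k : ℕ | 1 ≤ k ∧ 0 < dpow μ Γ k x y}

/-- A digraphon: a measurable kernel with values in `[0,1]`. -/
def IsDigraphon (Γ : Ω → Ω → ℝ) : Prop :=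
  Measurable (Function.uncurry Γ) ∧ ∀ x y, Γ x y ∈ Set.Icc (0 : ℝ) 1

/-- `X` is strongly connected in `Γ`. -/
def StronglyConnectedIn (μ : Measure Ω) (Γ : Ω → Ω → ℝ) (X : Set Ω) : Prop :=
  MeasurableSet X ∧ 0 < μ X ∧
    ∀ A B : Set Ω, MeasurableSet A → MeasurableSet B → A ∪ B = X → Disjoint A B →
      0 < μ A → 0 < μ B → 0 < ∫ x in A, ∫ y in B, Γ x y ∂μ ∂μ

/-- `X` is a strong component in `Γ`. -/
def StrongComponent (μ : Measure Ω) (Γ : Ω → Ω → ℝ) (X : Set Ω) : Prop :=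
  StronglyConnectedIn μ Γ X ∧
    ∀ Y : Set Ω, MeasurableSet Y → 0 < μ (X ∩ Y) → 0 < μ (Y \ X) →
      ¬ StronglyConnectedIn μ Γ Y

/-- `X` is fragmented in `Γ`. -/
def Fragmented (μ : Measure Ω) (Γ : Ω → Ω → ℝ) (X : Set Ω) : Prop :=
  ∀ Y : Set Ω, Y ⊆ X → MeasurableSet Y → ¬ StronglyConnectedIn μ Γ Y

/-- `τ` is an eigenvalue of the integral kernel operator of `Γ` on `L²(Ω;ℂ)`. -/
def IsEigenvalue (μ : Measure Ω) (Γ : Ω → Ω → ℝ) (τ : ℂ) : Prop :=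
  ∃ f : Ω → ℂ, MemLp f 2 μ ∧ ¬(f =ᵐ[μ] 0) ∧
    ∀ᵐ x ∂μ, ∫ y, f y * (Γ y x : ℂ) ∂μ = τ * f x

/-- The spectral radius of `Γ` (`0` if there are no eigenvalues). -/
noncomputable def specRad (μ : Measure Ω) (Γ : Ω → Ω → ℝ) : ℝ :=
  sSup (insert 0 {r : ℝ | ∃ τ : ℂ, IsEigenvalue μ Γ τ ∧ ‖τ‖ = r})

/-- The number of eigenvalues of modulus `specRad μ Γ`. -/
noncomputable def periphMult (μ : Measure Ω) (Γ : Ω → Ω → ℝ) : ℕ :=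
  {τ : ℂ | IsEigenvalue μ Γ τ ∧ ‖τ‖ = specRad μ Γ}.ncard

/-- `P : ZMod d → Set Ω` witnesses graphical `d`-periodicity of `Γ`. -/
def IsPeriodicityWitness (μ : Measure Ω) (Γ : Ω → Ω → ℝ) {d : ℕ} (P : ZMod d → Set Ω) : Prop :=
  (∀ j, MeasurableSet (P j)) ∧ Pairwise (Function.onFun Disjoint P) ∧ (⋃ j, P j) = Set.univ ∧
    ∀ j : ZMod d, (μ.prod μ) {p : Ω × Ω | p.1 ∈ P j ∧ p.2 ∉ P (j + 1) ∧ Γ p.1 p.2 ≠ 0} = 0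

/-- `Γ` is graphically `d`-periodic. -/
def GraphPeriodic (μ : Measure Ω) (Γ : Ω → Ω → ℝ) (d : ℕ) : Prop :=
  ∃ P : ZMod d → Set Ω, IsPeriodicityWitness μ Γ P

/-- `Γ` is aperiodic. -/
def Aperiodic (μ : Measure Ω) (Γ : Ω → Ω → ℝ) : Prop :=
  ∀ d : ℕ, 1 ≤ d → GraphPeriodic μ Γ d → d = 1

/-- `S ⊆ ℕ` is eventually `D`-periodic with shift `s`. -/
def EvPeriodic (D : ℕ) (s : ℤ) (S : Set ℕ) : Prop :=
  (∀ n ∈ S, (D : ℤ) ∣ ((n : ℤ) - s)) ∧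
    ∃ k : ℕ, ∀ n : ℕ, k ≤ n → (((D : ℤ) ∣ ((n : ℤ) - s)) ↔ n ∈ S)

/-- The homomorphism density `t(C_k, Γ)` of the directed `k`-cycle. -/
noncomputable def cycleDensity (μ : Measure Ω) (Γ : Ω → Ω → ℝ) (k : ℕ) : ℝ :=
  ∫ x : Fin k → Ω, ∏ i : Fin k, Γ (x i) (x (finRotate k i)) ∂(Measure.pi fun _ => μ)

/-- `Γ⟦A⟧` : the kernel equal to `Γ` on `A × A` and `0` elsewhere. -/
noncomputable def kerRestrict (Γ : Ω → Ω → ℝ) (A : Set Ω) : Ω → Ω → ℝ :=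
  fun x y => (A ×ˢ A).indicator (Function.uncurry Γ) (x, y)

/-- Equality of sets modulo a `μ`-nullset. -/
def AEEqSet (μ : Measure Ω) (A B : Set Ω) : Prop := μ ((A \ B) ∪ (B \ A)) = 0

/-- The normalized restriction of `μ` to `A`, as a measure on `↥A`. -/
noncomputable def subMeasure (μ : Measure Ω) (A : Set Ω) : Measure ↥A :=
  (μ A)⁻¹ • Measure.comap Subtype.val μ

/-- The restriction of a kernel to `A × A`, as a kernel on `↥A`. -/
def subKernel (Γ : Ω → Ω → ℝ) (A : Set Ω) : ↥A → ↥A → ℝ :=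
  fun a b => Γ ↑a ↑b

/-- A finite oriented graph: no pair of antiparallel edges (in particular no loops). -/
structure OrientedGraph where
  n : ℕ
  E : Finset (Fin n × Fin n)
  no_anti : ∀ e ∈ E, (e.2, e.1) ∉ E

/-- The homomorphism density `t(D, Γ)` of an oriented graph `D`. -/
noncomputable def homDensity (μ : Measure Ω) (Γ : Ω → Ω → ℝ) (D : OrientedGraph) : ℝ :=
  ∫ x : Fin D.n → Ω, ∏ e ∈ D.E, Γ (x e.1) (x e.2) ∂(Measure.pi fun _ => μ)

/-- The cut norm distance of two kernels. -/
noncomputable def cutNormDist (μ : Measure Ω) (U W : Ω → Ω → ℝ) : ℝ :=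
  sSup {r : ℝ | ∃ S T : Set Ω, MeasurableSet S ∧ MeasurableSet T ∧
    r = |∫ x in S, ∫ y in T, (U x y - W x y) ∂μ ∂μ|}

/-- The cut distance of two kernels. -/
noncomputable def cutDist (μ : Measure Ω) (U W : Ω → Ω → ℝ) : ℝ :=
  sInf {r : ℝ | ∃ e : Ω ≃ᵐ Ω, MeasurePreserving e μ μ ∧
    r = cutNormDist μ U (fun x y => W (e x) (e y))}


/-- Pulling back along an injective index map is measure preserving. -/
theorem mp_precomp {Ξ : Type*} [MeasurableSpace Ξ] (ξ : Measure Ξ) [IsProbabilityMeasure ξ]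
    {k n : ℕ} (f : Fin k → Fin n) (hf : Function.Injective f) :
    MeasurePreserving (fun x : Fin n → Ξ => fun i => x (f i))
      (Measure.pi fun _ => ξ) (Measure.pi fun _ => ξ) := by
  refine ⟨by fun_prop, ?_⟩
  have h0 : ProbabilityTheory.iIndepFun (fun (i : Fin n) (x : Fin n → Ξ) => x i)
      (Measure.pi fun _ => ξ) :=
    ProbabilityTheory.iIndepFun_pi (X := fun _ => id) (fun _ => aemeasurable_id)
  have h1 := h0.precomp hf
  rw [ProbabilityTheory.iIndepFun_iff_map_fun_eq_pi_map
    (fun i => (measurable_pi_apply _).aemeasurable)] at h1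
  have h2 : ∀ i, (Measure.pi fun _ : Fin n => ξ).map (fun x : Fin n → Ξ => x i) = ξ :=
    fun i => (measurePreserving_eval (fun _ => ξ) i).map_eq
  simp only [Function.comp_def, h2] at h1
  exact h1

/-- A self-map of a nonempty finite type without fixed points has a cycle. -/
theorem exists_cycle {m : ℕ} (g : Fin (m + 1) → Fin (m + 1)) (hg : ∀ i, g i ≠ i) :
    ∃ k, 2 ≤ k ∧ ∃ f : Fin k → Fin (m + 1), Function.Injective f ∧
      ∀ i, f (finRotate k i) = g (f i) := by
  obtain ⟨p, hp⟩ : ∃ p, p ∈ Function.periodicPts g := by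
    have : ¬ Function.Injective (fun j : ℕ => g^[j] 0) := not_injective_infinite_finite _
    simp only [Function.Injective, not_forall] at this
    obtain ⟨a, b, hab, hne⟩ := this
    wlog hlt : a < b generalizing a b
    · exact this b a hab.symm (Ne.symm hne) (by omega)
    refine ⟨g^[a] 0, b - a, by omega, ?_⟩
    change g^[b - a] (g^[a] 0) = _
    rw [← Function.iterate_add_apply, Nat.sub_add_cancel hlt.le]
    exact hab.symm
  have hpos := Function.minimalPeriod_pos_of_mem_periodicPts hp
  have hone : Function.minimalPeriod g p ≠ 1 := by
    intro h
    exact hg p (Function.minimalPeriod_eq_one_iff_isFixedPt.1 h)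
  obtain ⟨r, hr⟩ : ∃ r, Function.minimalPeriod g p = r + 1 :=
    ⟨Function.minimalPeriod g p - 1, by omega⟩
  refine ⟨r + 1, by omega, fun i => g^[i] p, ?_, ?_⟩
  · intro a b hab
    have := Function.iterate_injOn_Iio_minimalPeriod (f := g) (x := p)
      (by simp only [Set.mem_Iio, hr]; exact a.2) (by simp only [Set.mem_Iio, hr]; exact b.2) hab
    exact Fin.ext this
  · intro i
    simp only [finRotate_apply]
    rw [← Function.iterate_succ_apply' g, ← Function.iterate_mod_minimalPeriod_eq (n := Nat.succ _), hr]
    congr 2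
    simp [Fin.val_add]

/-- Probability that the sample point `i` has no outneighbour in the sample. -/
theorem sample_bound {Ξ : Type*} [MeasurableSpace Ξ] (ξ : Measure Ξ) [IsProbabilityMeasure ξ]
    (Ψ : Ξ → Ξ → ℝ) (hm : Measurable (Function.uncurry Ψ)) (c : ℝ≥0∞)
    (hc : ∀ᵐ x ∂ξ, ξ {y | Ψ x y = 0} ≤ c) (m : ℕ) (i : Fin (m + 1)) :
    (Measure.pi fun _ : Fin (m + 1) => ξ)
      {x | ∀ j : Fin m, Ψ (x i) (x (i.succAbove j)) = 0} ≤ c ^ m := by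
  have hS : MeasurableSet {q : Ξ × (Fin m → Ξ) | ∀ j : Fin m, Ψ q.1 (q.2 j) = 0} := by
    rw [Set.setOf_forall]
    refine MeasurableSet.iInter fun j => ?_
    have : Measurable fun q : Ξ × (Fin m → Ξ) => Ψ q.1 (q.2 j) :=
      hm.comp (measurable_fst.prodMk ((measurable_pi_apply j).comp measurable_snd))
    exact this (measurableSet_singleton 0)
  have hmp := measurePreserving_piFinSuccAbove (fun _ : Fin (m + 1) => ξ) i
  have h1 := hmp.measure_preimage hS.nullMeasurableSet
  have h2 : (MeasurableEquiv.piFinSuccAbove (fun _ : Fin (m + 1) => Ξ) i) ⁻¹'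
      {q : Ξ × (Fin m → Ξ) | ∀ j : Fin m, Ψ q.1 (q.2 j) = 0}
      = {x | ∀ j : Fin m, Ψ (x i) (x (i.succAbove j)) = 0} := rfl
  rw [← h2, h1, Measure.prod_apply hS]
  calc _ ≤ ∫⁻ _, c ^ m ∂ξ := by
        refine lintegral_mono_ae ?_
        filter_upwards [hc] with x hx
        have : Prod.mk x ⁻¹' {q : Ξ × (Fin m → Ξ) | ∀ j : Fin m, Ψ q.1 (q.2 j) = 0}
            = Set.pi Set.univ (fun _ => {y | Ψ x y = 0}) := by
          ext q; simp
        rw [this, Measure.pi_pi]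
        simpa using pow_le_pow_left' hx m
    _ = c ^ m := by simp

/-- A qualitative Caccetta–Häggkvist statement for digraphons: positive
minimum outdegree forces a directed cycle of positive density. -/
theorem caccetta_haggkvist_qualitative
    {Ξ : Type*} [MeasurableSpace Ξ] (ξ : Measure Ξ) [IsProbabilityMeasure ξ]
    (Ψ : Ξ → Ξ → ℝ) (hΨ : IsDigraphon Ψ)
    (hdeg : 0 < essInf (fun x => ∫ y, Ψ x y ∂ξ) ξ) :
    ∃ k : ℕ, 2 ≤ k ∧ 0 < cycleDensity ξ Ψ k := by
  obtain ⟨hm, hI⟩ := hΨ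
  set δ := essInf (fun x => ∫ y, Ψ x y ∂ξ) ξ with hδ
  have hmx : ∀ x, Measurable (Ψ x) := fun x => hm.comp measurable_prodMk_left
  have hint : ∀ x, Integrable (Ψ x) ξ := fun x =>
    Integrable.of_bound (hmx x).aestronglyMeasurable 1
      (Filter.Eventually.of_forall fun y => by
        rw [Real.norm_eq_abs, abs_of_nonneg (hI x y).1]; exact (hI x y).2)
  have hae : ∀ᵐ x ∂ξ, δ ≤ ∫ y, Ψ x y ∂ξ :=
    ae_essInf_le ⟨0, by
      simp only [Filter.eventually_map]
      exact Filter.Eventually.of_forall fun x => integral_nonneg fun y => (hI x y).1⟩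
  have hc' : ∀ᵐ x ∂ξ, ξ.real {y | Ψ x y = 0} ≤ 1 - δ := by
    filter_upwards [hae] with x hx
    have hZ : MeasurableSet {y | Ψ x y = 0} := hmx x (measurableSet_singleton 0)
    have h1 : ∫ y, Ψ x y ∂ξ ≤ ∫ y, ({y | Ψ x y = 0}ᶜ).indicator (fun _ => (1 : ℝ)) y ∂ξ := by
      refine integral_mono (hint x) ((integrable_const _).indicator hZ.compl) fun y => ?_
      by_cases h : Ψ x y = 0
      · simp [h]
      · simp [h, (hI x y).2]
    rw [integral_indicator_const _ hZ.compl, probReal_compl_eq_one_sub hZ] at h1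
    simp only [smul_eq_mul, mul_one] at h1
    linarith
  have hδ1 : 0 ≤ 1 - δ := by
    obtain ⟨x, hx⟩ := hc'.exists
    exact measureReal_nonneg.trans hx
  have hc : ∀ᵐ x ∂ξ, ξ {y | Ψ x y = 0} ≤ ENNReal.ofReal (1 - δ) := by
    filter_upwards [hc'] with x hx
    rw [← ofReal_measureReal]
    exact ENNReal.ofReal_le_ofReal hx
  obtain ⟨m, hmlt⟩ : ∃ m : ℕ, ((m : ℝ) + 1) * (1 - δ) ^ m < 1 := by
    have t1 := tendsto_self_mul_const_pow_of_lt_one hδ1 (by linarith)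
    have t2 := tendsto_pow_atTop_nhds_zero_of_lt_one hδ1 (by linarith)
    have t3 := t1.add t2
    rw [add_zero] at t3
    obtain ⟨m, h⟩ := (t3.eventually (gt_mem_nhds (zero_lt_one' ℝ))).exists
    exact ⟨m, by linarith⟩
  by_contra hcon
  push Not at hcon
  have hzero : ∀ k, 2 ≤ k → ∀ᵐ x ∂(Measure.pi fun _ : Fin k => ξ),
      ∏ i : Fin k, Ψ (x i) (x (finRotate k i)) = 0 := by
    intro k hk
    have hnn : ∀ x : Fin k → Ξ, 0 ≤ ∏ i : Fin k, Ψ (x i) (x (finRotate k i)) :=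
      fun x => Finset.prod_nonneg fun i _ => (hI _ _).1
    have hmeas : Measurable fun x : Fin k → Ξ => ∏ i : Fin k, Ψ (x i) (x (finRotate k i)) :=
      Finset.measurable_prod _ fun i _ =>
        hm.comp (g := Function.uncurry Ψ)
          (f := fun x : Fin k → Ξ => (x i, x (finRotate k i))) (by fun_prop)
    have hi : Integrable (fun x : Fin k → Ξ => ∏ i : Fin k, Ψ (x i) (x (finRotate k i)))
        (Measure.pi fun _ => ξ) :=
      Integrable.of_bound hmeas.aestronglyMeasurable 1
        (Filter.Eventually.of_forall fun x => by
          rw [Real.norm_eq_abs, abs_of_nonneg (hnn x)]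
          exact Finset.prod_le_one (fun i _ => (hI _ _).1) fun i _ => (hI _ _).2)
    have h0 : ∫ x : Fin k → Ξ, ∏ i : Fin k, Ψ (x i) (x (finRotate k i))
        ∂(Measure.pi fun _ => ξ) = 0 :=
      le_antisymm (hcon k hk) (integral_nonneg hnn)
    exact (integral_eq_zero_iff_of_nonneg hnn hi).1 h0
  have hall : ∀ᵐ x ∂(Measure.pi fun _ : Fin (m + 1) => ξ),
      ∀ k, 2 ≤ k → ∀ f : Fin k → Fin (m + 1), Function.Injective f →
        ∏ i : Fin k, Ψ (x (f i)) (x (f (finRotate k i))) = 0 := by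
    rw [ae_all_iff]; intro k
    rw [ae_all_iff]; intro hk
    rw [ae_all_iff]; intro f
    rw [ae_all_iff]; intro hf
    exact (mp_precomp ξ f hf).quasiMeasurePreserving.ae (hzero k hk)
  have hbad : (Measure.pi fun _ : Fin (m + 1) => ξ)
      (⋃ i, {x | ∀ j : Fin m, Ψ (x i) (x (i.succAbove j)) = 0}) < 1 := by
    refine (measure_iUnion_fintype_le _ _).trans_lt ?_
    refine (Finset.sum_le_sum fun i _ => sample_bound ξ Ψ hm _ hc m i).trans_lt ?_
    rw [Finset.sum_const, Finset.card_univ, Fintype.card_fin, nsmul_eq_mul,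
      ← ENNReal.ofReal_pow hδ1, ← ENNReal.ofReal_natCast, ← ENNReal.ofReal_mul (by positivity),
      ENNReal.ofReal_lt_one]
    push_cast
    exact hmlt
  have huniv : (Measure.pi fun _ : Fin (m + 1) => ξ)
      (⋃ i, {x | ∀ j : Fin m, Ψ (x i) (x (i.succAbove j)) = 0}) = 1 := by
    rw [← measure_univ (μ := Measure.pi fun _ : Fin (m + 1) => ξ)]
    refine measure_congr (Filter.eventuallyEq_univ.2 ?_)
    filter_upwards [hall] with x hx
    by_contra hxn
    simp only [Set.mem_iUnion, Set.mem_setOf_eq, not_exists, not_forall] at hxn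
    choose j hj using hxn
    obtain ⟨k, hk, f, hf, hfr⟩ := exists_cycle (fun i => i.succAbove (j i))
      (fun i => Fin.succAbove_ne i (j i))
    obtain ⟨i, -, hi⟩ := Finset.prod_eq_zero_iff.1 (hx k hk f hf)
    rw [hfr i] at hi
    exact hj _ hi
  exact absurd huniv hbad.ne

end Digraphon
end

section
/- Let Γ be a digraphon on a probability space (Ω,μ) and let Ω = X₀ ⊔ ⨆_{i∈I} X_i be its decomposition into strong components X_i (i ∈ I) and a fragmented (or null) set X₀. Then for every integer k ≥ 2, t(C_k,Γ) = ∑_{i∈I} t(C_k, Γ⟦X_i⟧). -/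
open MeasureTheory Filter Set Topology
open scoped ENNReal Real

namespace Digraphon

variable {Ω : Type*} [MeasurableSpace Ω]

/-- Extended nonnegative kernel powers. -/
noncomputable def ePow (μ : Measure Ω) (Γ : Ω → Ω → ℝ) : ℕ → Ω → Ω → ℝ≥0∞
  | 0 => fun x y => ENNReal.ofReal (Γ x y)
  | n + 1 => fun x y => ∫⁻ z, ENNReal.ofReal (Γ x z) * ePow μ Γ n z y ∂μ

/-- Reachability. -/
def Rch (μ : Measure Ω) (Γ : Ω → Ω → ℝ) (x y : Ω) : Prop := ∃ n, ePow μ Γ n x y ≠ 0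

/-- Mutual reachability. -/
def Mut (μ : Measure Ω) (Γ : Ω → Ω → ℝ) (x y : Ω) : Prop := Rch μ Γ x y ∧ Rch μ Γ y x

lemma ePow_meas (μ : Measure Ω) [IsProbabilityMeasure μ] (Γ : Ω → Ω → ℝ)
    (hΓ : Measurable (Function.uncurry Γ)) (n : ℕ) :
    Measurable (Function.uncurry (ePow μ Γ n)) := by
  induction n with
  | zero => exact hΓ.ennreal_ofReal
  | succ n ih =>
    refine Measurable.lintegral_prod_right'
      (f := fun q : (Ω × Ω) × Ω => ENNReal.ofReal (Γ q.1.1 q.2) * ePow μ Γ n q.2 q.1.2) ?_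
    refine Measurable.mul ?_ ?_
    · exact (hΓ.comp (f := fun q : (Ω × Ω) × Ω => (q.1.1, q.2)) (by fun_prop)).ennreal_ofReal
    · exact ih.comp (f := fun q : (Ω × Ω) × Ω => (q.2, q.1.2)) (by fun_prop)

lemma ePow_comp {μ : Measure Ω} {Γ : Ω → Ω → ℝ} {α : Type*} [MeasurableSpace α]
    [IsProbabilityMeasure μ]
    (hΓ : Measurable (Function.uncurry Γ)) (n : ℕ) {f g : α → Ω} (hf : Measurable f)
    (hg : Measurable g) : Measurable (fun a => ePow μ Γ n (f a) (g a)) :=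
  (ePow_meas μ Γ hΓ n).comp (hf.prodMk hg)

lemma ePow_add (μ : Measure Ω) [IsProbabilityMeasure μ] (Γ : Ω → Ω → ℝ)
    (hΓ : Measurable (Function.uncurry Γ)) (n m : ℕ) (x y : Ω) :
    ePow μ Γ (n + m + 1) x y = ∫⁻ z, ePow μ Γ n x z * ePow μ Γ m z y ∂μ := by
  induction n generalizing x y with
  | zero => simp [ePow]
  | succ n ih =>
    have e : n + 1 + m + 1 = (n + m + 1) + 1 := by ring
    rw [e]
    have hg : ∀ {α : Type _} [MeasurableSpace α] {f g : α → Ω}, Measurable f → Measurable g →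
        Measurable (fun a => ENNReal.ofReal (Γ (f a) (g a))) := fun hf hg =>
      (hΓ.comp (hf.prodMk hg)).ennreal_ofReal
    calc ePow μ Γ ((n + m + 1) + 1) x y
        = ∫⁻ w, ENNReal.ofReal (Γ x w) * ∫⁻ z, ePow μ Γ n w z * ePow μ Γ m z y ∂μ ∂μ := by
          simp only [ePow.eq_2 μ Γ (n + m + 1)]
          simp only [ih]
      _ = ∫⁻ w, ∫⁻ z, ENNReal.ofReal (Γ x w) * (ePow μ Γ n w z * ePow μ Γ m z y) ∂μ ∂μ := by
          refine lintegral_congr fun w => ?_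
          rw [lintegral_const_mul]
          exact (ePow_comp hΓ n measurable_const measurable_id).mul
            (ePow_comp hΓ m measurable_id measurable_const)
      _ = ∫⁻ z, ∫⁻ w, ENNReal.ofReal (Γ x w) * (ePow μ Γ n w z * ePow μ Γ m z y) ∂μ ∂μ := by
          refine lintegral_lintegral_swap (Measurable.aemeasurable ?_)
          exact (hg measurable_const measurable_fst).mul
            ((ePow_comp hΓ n measurable_fst measurable_snd).mul
              (ePow_comp hΓ m measurable_snd measurable_const))
      _ = ∫⁻ z, ePow μ Γ (n + 1) x z * ePow μ Γ m z y ∂μ := by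
          refine lintegral_congr fun z => ?_
          simp only [← mul_assoc]
          rw [lintegral_mul_const]
          · rfl
          · exact (hg measurable_const measurable_id).mul
              (ePow_comp hΓ n measurable_id measurable_const)

lemma Rch_meas {μ : Measure Ω} {Γ : Ω → Ω → ℝ} {α : Type*} [MeasurableSpace α]
    [IsProbabilityMeasure μ]
    (hΓ : Measurable (Function.uncurry Γ)) {f g : α → Ω} (hf : Measurable f)
    (hg : Measurable g) : Measurable (fun a => Rch μ Γ (f a) (g a)) := by
  unfold Rch
  refine Measurable.exists fun n => ?_
  refine Measurable.not ?_
  exact measurableSet_setOfPred.1 (measurableSet_eq_fun (ePow_comp hΓ n hf hg) measurable_const)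

lemma Mut_meas {μ : Measure Ω} {Γ : Ω → Ω → ℝ} {α : Type*} [MeasurableSpace α]
    [IsProbabilityMeasure μ]
    (hΓ : Measurable (Function.uncurry Γ)) {f g : α → Ω} (hf : Measurable f)
    (hg : Measurable g) : Measurable (fun a => Mut μ Γ (f a) (g a)) :=
  (Rch_meas hΓ hf hg).and (Rch_meas hΓ hg hf)

lemma Mut.symm {μ : Measure Ω} {Γ : Ω → Ω → ℝ} {x y : Ω} (h : Mut μ Γ x y) : Mut μ Γ y x :=
  ⟨h.2, h.1⟩

lemma Rch_trans (μ : Measure Ω) [IsProbabilityMeasure μ] (Γ : Ω → Ω → ℝ)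
    (hΓ : Measurable (Function.uncurry Γ)) (x z : Ω) :
    ∀ᵐ y ∂μ, Rch μ Γ x y → Rch μ Γ y z → Rch μ Γ x z := by
  by_cases h : Rch μ Γ x z
  · exact Eventually.of_forall fun _ _ _ => h
  · have key : ∀ n m, ∀ᵐ y ∂μ, ePow μ Γ n x y * ePow μ Γ m y z = 0 := by
      intro n m
      have h0 : ePow μ Γ (n + m + 1) x z = 0 := by
        by_contra hne; exact h ⟨_, hne⟩
      rw [ePow_add μ Γ hΓ, lintegral_eq_zero_iff] at h0
      · exact h0
      · exact (ePow_comp hΓ n measurable_const measurable_id).mul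
            (ePow_comp hΓ m measurable_id measurable_const)
    have key2 := ae_all_iff.2 fun n => ae_all_iff.2 (key n)
    filter_upwards [key2] with y hy
    rintro ⟨n, hn⟩ ⟨m, hm⟩
    exact absurd (hy n m) (mul_ne_zero hn hm)

lemma Mut_trans (μ : Measure Ω) [IsProbabilityMeasure μ] (Γ : Ω → Ω → ℝ)
    (hΓ : Measurable (Function.uncurry Γ)) (x z : Ω) :
    ∀ᵐ y ∂μ, Mut μ Γ x y → Mut μ Γ y z → Mut μ Γ x z := by
  filter_upwards [Rch_trans μ Γ hΓ x z, Rch_trans μ Γ hΓ z x] with y h1 h2 h3 h4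
  exact ⟨h1 h3.1 h4.1, h2 h4.2 h3.2⟩

lemma ae_swap {μ : Measure Ω} [IsProbabilityMeasure μ] {p : Ω → Ω → Prop}
    (hp : Measurable (fun q : Ω × Ω => p q.1 q.2)) (h : ∀ᵐ x ∂μ, ∀ᵐ y ∂μ, p x y) :
    ∀ᵐ y ∂μ, ∀ᵐ x ∂μ, p x y :=
  (Measure.ae_ae_comm (measurableSet_setOfPred.2 hp)).1 h

lemma good_pt (μ : Measure Ω) [IsProbabilityMeasure μ] (Γ : Ω → Ω → ℝ)
    (hΓ : Measurable (Function.uncurry Γ)) :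
    ∀ᵐ x ∂μ, ∀ᵐ a ∂μ, ∀ᵐ b ∂μ, Rch μ Γ a x → Rch μ Γ x b → Rch μ Γ a b := by
  have h : ∀ᵐ q ∂(μ.prod μ), ∀ᵐ x ∂μ, (Rch μ Γ q.1 x → Rch μ Γ x q.2 → Rch μ Γ q.1 q.2) :=
    Eventually.of_forall fun q => Rch_trans μ Γ hΓ q.1 q.2
  have h2 := (Measure.ae_ae_comm (measurableSet_setOfPred.2 (by
    refine Measurable.imp ?_ (Measurable.imp ?_ ?_)
    · exact Rch_meas hΓ (by fun_prop) (by fun_prop)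
    · exact Rch_meas hΓ (by fun_prop) (by fun_prop)
    · exact Rch_meas hΓ (by fun_prop) (by fun_prop)))).1 h
  filter_upwards [h2] with x hx
  exact Measure.ae_ae_of_ae_prod hx

lemma sc_of_good (μ : Measure Ω) [IsProbabilityMeasure μ] (Γ : Ω → Ω → ℝ)
    (hΓ : IsDigraphon Γ) (x : Ω)
    (hx : ∀ᵐ a ∂μ, ∀ᵐ b ∂μ, Rch μ Γ a x → Rch μ Γ x b → Rch μ Γ a b)
    (D : Set Ω) (hD : MeasurableSet D) (hDsub : D ⊆ {y | Mut μ Γ x y})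
    (hDae : μ ({y | Mut μ Γ x y} \ D) = 0) (hpos : 0 < μ D) :
    StronglyConnectedIn μ Γ D := by
  refine ⟨hD, hpos, fun A B hA hB hAB hdisj hApos hBpos => ?_⟩
  have hm := hΓ.1
  have hint : Integrable (Function.uncurry Γ) ((μ.restrict A).prod (μ.restrict B)) := by
    refine Integrable.of_bound hm.aestronglyMeasurable 1 (Eventually.of_forall fun q => ?_)
    have := hΓ.2 q.1 q.2
    simp only [Function.uncurry, Real.norm_eq_abs]
    rw [abs_of_nonneg this.1]; exact this.2
  have hnn : 0 ≤ ∫ x in A, ∫ y in B, Γ x y ∂μ ∂μ :=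
    integral_nonneg fun a => integral_nonneg fun b => (hΓ.2 a b).1
  refine lt_of_le_of_ne hnn fun h0 => ?_
  have hbase : ∀ᵐ a ∂μ, ∀ᵐ b ∂μ, a ∈ A → b ∈ B → Γ a b = 0 := by
    have e : ∫ q, Function.uncurry Γ q ∂((μ.restrict A).prod (μ.restrict B)) = 0 := by
      rw [integral_prod _ hint]; exact h0.symm
    rw [integral_eq_zero_iff_of_nonneg (f := Function.uncurry Γ) (fun q : Ω × Ω => (hΓ.2 q.1 q.2).1) hint] at e
    have e2 := Measure.ae_ae_of_ae_prod e
    rw [ae_restrict_iff' hA] at e2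
    filter_upwards [e2] with a ha
    by_cases haA : a ∈ A
    · have := ha haA
      rw [ae_restrict_iff' hB] at this
      filter_upwards [this] with b hb _ hbB using hb hbB
    · exact Eventually.of_forall fun b h => absurd h haA
  have hA' : Measurable (fun q : Ω × Ω => q.1 ∈ A) :=
    measurableSet_setOfPred.1 (measurable_fst hA)
  have hB' : Measurable (fun q : Ω × Ω => q.2 ∈ B) :=
    measurableSet_setOfPred.1 (measurable_snd hB)
  have hzD : ∀ᵐ z ∂μ, Mut μ Γ x z → z ∈ D := by
    have := measure_eq_zero_iff_ae_notMem.1 hDae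
    filter_upwards [this] with z hz h
    by_contra hn; exact hz ⟨h, hn⟩
  have ht1 : ∀ᵐ a ∂μ, ∀ᵐ z ∂μ, Rch μ Γ x a → Rch μ Γ a z → Rch μ Γ x z := by
    refine ae_swap (p := fun z a => Rch μ Γ x a → Rch μ Γ a z → Rch μ Γ x z) ?_
      (Eventually.of_forall fun z => Rch_trans μ Γ hm x z)
    refine Measurable.imp ?_ (Measurable.imp ?_ ?_)
    · exact Rch_meas hm (by fun_prop) (by fun_prop)
    · exact Rch_meas hm (by fun_prop) (by fun_prop)
    · exact Rch_meas hm (by fun_prop) (by fun_prop)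
  have ht2 : ∀ᵐ b ∂μ, ∀ᵐ z ∂μ, Rch μ Γ z b → Rch μ Γ b x → Rch μ Γ z x := by
    refine ae_swap (p := fun z b => Rch μ Γ z b → Rch μ Γ b x → Rch μ Γ z x) ?_
      (Eventually.of_forall fun z => Rch_trans μ Γ hm z x)
    refine Measurable.imp ?_ (Measurable.imp ?_ ?_)
    · exact Rch_meas hm (by fun_prop) (by fun_prop)
    · exact Rch_meas hm (by fun_prop) (by fun_prop)
    · exact Rch_meas hm (by fun_prop) (by fun_prop)
  have hall : ∀ n, ∀ᵐ a ∂μ, ∀ᵐ b ∂μ, a ∈ A → b ∈ B → ePow μ Γ n a b = 0 := by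
    intro n
    induction n with
    | zero =>
      filter_upwards [hbase] with a ha
      filter_upwards [ha] with b hb h1 h2
      simp [ePow, hb h1 h2]
    | succ n ih =>
      have ih' := ae_swap (p := fun a b => a ∈ A → b ∈ B → ePow μ Γ n a b = 0) (by
        refine Measurable.imp hA' (Measurable.imp hB' ?_)
        exact measurableSet_setOfPred.1 (measurableSet_eq_fun
          (ePow_comp hm n measurable_fst measurable_snd) measurable_const)) ih
      filter_upwards [hbase, ht1] with a ha1 ha2
      filter_upwards [ih', ht2] with b hb1 hb2 haA hbB
      have haM : Mut μ Γ x a := hDsub (hAB ▸ Or.inl haA)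
      have hbM : Mut μ Γ x b := hDsub (hAB ▸ Or.inr hbB)
      simp only [ePow]
      refine (lintegral_eq_zero_iff' ?_).2 ?_
      · exact ((ePow_comp (μ := μ) hm 0 measurable_const measurable_id).mul
          (ePow_comp hm n measurable_id measurable_const)).aemeasurable
      filter_upwards [ha1, ha2, hb1, hb2, hzD] with z k1 k2 k3 k4 k5
      by_contra hne
      obtain ⟨hne1, hne2⟩ := mul_ne_zero_iff.1 hne
      have hz : z ∈ A ∪ B := hAB ▸ k5 ⟨k2 haM.1 ⟨0, hne1⟩, k4 ⟨n, hne2⟩ hbM.2⟩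
      rcases hz with hz | hz
      · exact hne2 (k3 hz hbB)
      · exact hne1 (by simp [k1 haA hz])
  have hfin : ∀ᵐ a ∂μ, a ∉ A := by
    have hall' := ae_all_iff.2 hall
    filter_upwards [hall', hx] with a h1 h2 haA
    have h1' := ae_all_iff.2 h1
    have : ∀ᵐ b ∂μ, b ∉ B := by
      filter_upwards [h1', h2] with b h3 h4 hbB
      have haM : Mut μ Γ x a := hDsub (hAB ▸ Or.inl haA)
      have hbM : Mut μ Γ x b := hDsub (hAB ▸ Or.inr hbB)
      obtain ⟨n, hn⟩ := h4 haM.2 hbM.1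
      exact hn (h3 n haA hbB)
    exact hBpos.ne' (measure_eq_zero_iff_ae_notMem.2 this)
  exact hApos.ne' (measure_eq_zero_iff_ae_notMem.2 hfin)

lemma class_in_component
    (μ : Measure Ω) [IsProbabilityMeasure μ]
    (Γ : Ω → Ω → ℝ) (hΓ : IsDigraphon Γ)
    (I : Set ℕ) (X : ℕ → Set Ω)
    (hXmeas : ∀ i ∈ insert 0 I, MeasurableSet (X i))
    (hXcover : (⋃ i ∈ insert 0 I, X i) = Set.univ)
    (hX0 : μ (X 0) = 0 ∨ Fragmented μ Γ (X 0))
    (hXcomp : ∀ i ∈ I, StrongComponent μ Γ (X i)) :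
    ∀ᵐ x ∂μ, μ {y | Mut μ Γ x y} ≠ 0 → ∃ i : I, μ ({y | Mut μ Γ x y} \ X i) = 0 := by
  filter_upwards [good_pt μ Γ hΓ.1] with x hx hne
  have hCm : MeasurableSet {y | Mut μ Γ x y} :=
    measurableSet_setOfPred.2 (Mut_meas hΓ.1 measurable_const measurable_id)
  by_cases hex : ∃ i ∈ I, μ (X i ∩ {y | Mut μ Γ x y}) ≠ 0
  · obtain ⟨i, hi, hne'⟩ := hex
    refine ⟨⟨i, hi⟩, ?_⟩
    by_contra hc
    exact (hXcomp i hi).2 _ hCm (pos_iff_ne_zero.2 hne') (pos_iff_ne_zero.2 hc)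
      (sc_of_good μ Γ hΓ x hx _ hCm subset_rfl (by simp) (pos_iff_ne_zero.2 hne))
  · exfalso
    push Not at hex
    have hX0m := hXmeas 0 (by simp)
    have hdiff : μ ({y | Mut μ Γ x y} \ ({y | Mut μ Γ x y} ∩ X 0)) = 0 := by
      refine measure_mono_null (t := ⋃ i ∈ I, X i ∩ {y | Mut μ Γ x y}) ?_
        ((measure_biUnion_null_iff I.to_countable).2 hex)
      rintro y ⟨hy1, hy2⟩
      have : y ∈ ⋃ i ∈ insert 0 I, X i := hXcover ▸ mem_univ y
      simp only [mem_iUnion] at this ⊢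
      obtain ⟨i, hi, hyi⟩ := this
      rcases hi with rfl | hi
      · exact absurd ⟨hy1, hyi⟩ hy2
      · exact ⟨i, hi, hyi, hy1⟩
    have hpos : μ ({y | Mut μ Γ x y} ∩ X 0) ≠ 0 := by
      intro h0
      apply hne
      have := measure_union_null hdiff h0
      rwa [sdiff_union_of_subset inter_subset_left] at this
    rcases hX0 with h0 | h0
    · exact hpos (measure_mono_null inter_subset_right h0)
    · exact h0 _ inter_subset_right (hCm.inter hX0m)
        (sc_of_good μ Γ hΓ x hx _ (hCm.inter hX0m) inter_subset_left hdiff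
          (pos_iff_ne_zero.2 hpos))

lemma pair_in_component
    (μ : Measure Ω) [IsProbabilityMeasure μ]
    (Γ : Ω → Ω → ℝ) (hΓ : IsDigraphon Γ)
    (I : Set ℕ) (X : ℕ → Set Ω)
    (hXmeas : ∀ i ∈ insert 0 I, MeasurableSet (X i))
    (hXdisj : (insert 0 I).PairwiseDisjoint X)
    (hXcover : (⋃ i ∈ insert 0 I, X i) = Set.univ)
    (hX0 : μ (X 0) = 0 ∨ Fragmented μ Γ (X 0))
    (hXcomp : ∀ i ∈ I, StrongComponent μ Γ (X i)) :
    ∀ᵐ x ∂μ, ∀ᵐ y ∂μ, Mut μ Γ x y → ∃ i : I, x ∈ X i ∧ y ∈ X i := by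
  have hm := hΓ.1
  have ha : ∀ᵐ x ∂μ, ∀ᵐ y ∂μ, Mut μ Γ x y →
      ∃ i : I, y ∈ X i ∧ μ ({y | Mut μ Γ x y} \ X i) = 0 ∧ μ {y | Mut μ Γ x y} ≠ 0 := by
    filter_upwards [class_in_component μ Γ hΓ I X hXmeas hXcover hX0 hXcomp] with x hx
    by_cases h0 : μ {y | Mut μ Γ x y} = 0
    · filter_upwards [measure_eq_zero_iff_ae_notMem.1 h0] with y hy h using absurd h hy
    · obtain ⟨i, hi⟩ := hx h0
      filter_upwards [measure_eq_zero_iff_ae_notMem.1 hi] with y hy h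
      refine ⟨i, ?_, hi, h0⟩
      by_contra hn; exact hy ⟨h, hn⟩
  have hE : MeasurableSet {q : Ω × Ω | Mut μ Γ q.1 q.2} :=
    measurableSet_setOfPred.2 (Mut_meas hm measurable_fst measurable_snd)
  have hXm : ∀ i : I, MeasurableSet (X i) := fun i => hXmeas i (Or.inr i.2)
  have hb := ae_swap (p := fun x y => Mut μ Γ x y →
      ∃ i : I, y ∈ X i ∧ μ ({y | Mut μ Γ x y} \ X i) = 0 ∧ μ {y | Mut μ Γ x y} ≠ 0) (by
    refine Measurable.imp (Mut_meas hm measurable_fst measurable_snd) ?_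
    refine Measurable.exists fun i => Measurable.and ?_ (Measurable.and ?_ (Measurable.not ?_))
    · exact measurableSet_setOfPred.1 (measurable_snd (hXm i))
    · refine measurableSet_setOfPred.1 (measurableSet_eq_fun (f := fun q : Ω × Ω =>
        μ ({y | Mut μ Γ q.1 y} \ X i)) ?_ measurable_const)
      exact (measurable_measure_prodMk_left (ν := μ)
        (hE.diff (measurable_snd (hXm i)))).comp measurable_fst
    · refine measurableSet_setOfPred.1 (measurableSet_eq_fun (f := fun q : Ω × Ω =>
        μ ({y | Mut μ Γ q.1 y})) ?_ measurable_const)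
      exact (measurable_measure_prodMk_left (ν := μ) hE).comp measurable_fst) ha
  have hc : ∀ x, ∀ᵐ y ∂μ, ∀ᵐ z ∂μ, Mut μ Γ x y → Mut μ Γ y z → Mut μ Γ x z := by
    intro x
    refine ae_swap (p := fun z y => Mut μ Γ x y → Mut μ Γ y z → Mut μ Γ x z) ?_
      (Eventually.of_forall fun z => Mut_trans μ Γ hm x z)
    refine Measurable.imp ?_ (Measurable.imp ?_ ?_)
    · exact Mut_meas hm (by fun_prop) (by fun_prop)
    · exact Mut_meas hm (by fun_prop) (by fun_prop)
    · exact Mut_meas hm (by fun_prop) (by fun_prop)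
  filter_upwards [ha, hb] with x hxa hxb
  filter_upwards [hxa, hxb, hc x] with y h1 h2 h3 hxy
  obtain ⟨i, hyi, hi, -⟩ := h1 hxy
  obtain ⟨j, hxj, hj, hne⟩ := h2 hxy.symm
  have hij : i = j := by
    by_contra hij
    have hd : Disjoint (X i) (X j) :=
      hXdisj (Or.inr i.2) (Or.inr j.2) (fun h => hij (Subtype.ext h))
    apply hne
    rw [measure_eq_zero_iff_ae_notMem]
    filter_upwards [h3, measure_eq_zero_iff_ae_notMem.1 hi,
      measure_eq_zero_iff_ae_notMem.1 hj] with z k1 k2 k3 hz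
    have hzi : z ∈ X i := by
      by_contra hn; exact k2 ⟨k1 hxy hz, hn⟩
    have hzj : z ∈ X j := by
      by_contra hn; exact k3 ⟨hz, hn⟩
    exact disjoint_left.1 hd hzi hzj
  exact ⟨j, hxj, hij ▸ hyi⟩

lemma ae_pair (μ : Measure Ω) [IsProbabilityMeasure μ] {k : ℕ} {i j : Fin k} (hij : i ≠ j)
    {p : Ω → Ω → Prop} (h : ∀ᵐ x ∂μ, ∀ᵐ y ∂μ, p x y)
    (hp : Measurable fun q : Ω × Ω => p q.1 q.2) :
    ∀ᵐ x ∂(Measure.pi fun _ : Fin k => μ), p (x i) (x j) := by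
  have hind := ProbabilityTheory.iIndepFun_pi (ι := Fin k) (μ := fun _ => μ)
    (X := fun _ (ω : Ω) => ω) (fun _ => aemeasurable_id)
  have h2 := (ProbabilityTheory.indepFun_iff_map_prod_eq_prod_map_map
    (measurable_pi_apply i).aemeasurable (measurable_pi_apply j).aemeasurable).1
    (hind.indepFun hij)
  rw [(measurePreserving_eval (fun _ : Fin k => μ) i).map_eq,
    (measurePreserving_eval (fun _ : Fin k => μ) j).map_eq] at h2
  have h3 := (Measure.ae_prod_iff_ae_ae (μ := μ) (ν := μ) (measurableSet_setOfPred.2 hp)).2 h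
  rw [← h2] at h3
  exact ae_of_ae_map (by fun_prop) h3

lemma ae_triple (μ : Measure Ω) [IsProbabilityMeasure μ] {k : ℕ} {i j l : Fin k}
    (hij : i ≠ j) (hlj : l ≠ j)
    {p : Ω × Ω → Ω → Prop} (h : ∀ q, ∀ᵐ y ∂μ, p q y)
    (hp : Measurable fun q : (Ω × Ω) × Ω => p q.1 q.2) :
    ∀ᵐ x ∂(Measure.pi fun _ : Fin k => μ), p (x i, x l) (x j) := by
  have hind := ProbabilityTheory.iIndepFun_pi (ι := Fin k) (μ := fun _ => μ)
    (X := fun _ (ω : Ω) => ω) (fun _ => aemeasurable_id)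
  have h2 := (ProbabilityTheory.indepFun_iff_map_prod_eq_prod_map_map
    ((measurable_pi_apply i).prodMk (measurable_pi_apply l)).aemeasurable
    (measurable_pi_apply j).aemeasurable).1 (hind.indepFun_prodMk (fun i => by fun_prop) i l j hij hlj)
  rw [(measurePreserving_eval (fun _ : Fin k => μ) j).map_eq] at h2
  have h3 := (Measure.ae_prod_iff_ae_ae
    (μ := Measure.map (fun x : Fin k → Ω => (x i, x l)) (Measure.pi fun _ : Fin k => μ))
    (ν := μ) (measurableSet_setOfPred.2 hp)).2 (Eventually.of_forall h)
  rw [← h2] at h3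
  exact ae_of_ae_map (by fun_prop) h3

open scoped Fin.NatCast Fin.CommRing in
lemma cyc_rel {n : ℕ} (S : Fin (n + 2) → Fin (n + 2) → Prop) (h1 : ∀ i, S i (i + 1))
    (ht : ∀ i j l, i ≠ j → l ≠ j → S i j → S j l → S i l) (i : Fin (n + 2)) :
    S (i + 1) i := by
  have key : ∀ m : ℕ, m < n + 1 → S (i + 1) (i + 1 + (m + 1 : ℕ)) := by
    intro m
    induction m with
    | zero => intro _; simpa using h1 (i + 1)
    | succ m ih =>
      intro hm
      have h2 := h1 (i + 1 + ((m + 1 : ℕ) : Fin (n + 2)))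
      have e : i + 1 + ((m + 1 : ℕ) : Fin (n + 2)) + 1 = i + 1 + ((m + 1 + 1 : ℕ) : Fin (n + 2)) := by
        push_cast; ring
      rw [e] at h2
      refine ht _ _ _ ?_ ?_ (ih (by omega)) h2
      · intro h
        have h3 : ((m + 1 : ℕ) : Fin (n + 2)) = 0 := by
          simpa using h.symm
        have := congrArg Fin.val h3
        rw [Fin.val_natCast, Nat.mod_eq_of_lt (by omega)] at this
        simp at this
      · intro h
        rw [← e] at h
        have h3 : (1 : Fin (n + 2)) = 0 := by simpa using h
        exact one_ne_zero h3
  have h := key n (by omega)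
  have e : i + 1 + ((n + 1 : ℕ) : Fin (n + 2)) = i := by
    have : ((n + 1 + 1 : ℕ) : Fin (n + 2)) = 0 := Fin.natCast_self (n + 2)
    rw [add_assoc, add_comm (1 : Fin (n + 2))]
    push_cast at this ⊢
    rw [this, add_zero]
  rwa [e] at h

open scoped Fin.NatCast Fin.CommRing in
lemma cycle_in_component
    (μ : Measure Ω) [IsProbabilityMeasure μ]
    (Γ : Ω → Ω → ℝ) (hΓ : IsDigraphon Γ)
    (I : Set ℕ) (X : ℕ → Set Ω)
    (hXmeas : ∀ i ∈ insert 0 I, MeasurableSet (X i))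
    (hXdisj : (insert 0 I).PairwiseDisjoint X)
    (hXcover : (⋃ i ∈ insert 0 I, X i) = Set.univ)
    (hX0 : μ (X 0) = 0 ∨ Fragmented μ Γ (X 0))
    (hXcomp : ∀ i ∈ I, StrongComponent μ Γ (X i)) (n : ℕ) :
    ∀ᵐ x ∂(Measure.pi fun _ : Fin (n + 2) => μ),
      (∀ i : Fin (n + 2), Γ (x i) (x (i + 1)) ≠ 0) → ∃ c : I, ∀ i, x i ∈ X c := by
  have hm := hΓ.1
  have hXm : ∀ i : I, MeasurableSet (X i) := fun i => hXmeas i (Or.inr i.2)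
  have hP : ∀ᵐ x ∂(Measure.pi fun _ : Fin (n + 2) => μ), ∀ i : Fin (n + 2),
      Mut μ Γ (x i) (x (i + 1)) → ∃ c : I, x i ∈ X c ∧ x (i + 1) ∈ X c := by
    refine ae_all_iff.2 fun i => ?_
    refine ae_pair μ (p := fun a b => Mut μ Γ a b → ∃ c : I, a ∈ X c ∧ b ∈ X c) (by simp)
      (pair_in_component μ Γ hΓ I X hXmeas hXdisj hXcover hX0 hXcomp) ?_
    refine Measurable.imp (Mut_meas hm measurable_fst measurable_snd) ?_
    refine Measurable.exists fun c => Measurable.and ?_ ?_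
    · exact measurableSet_setOfPred.1 (measurable_fst (hXm c))
    · exact measurableSet_setOfPred.1 (measurable_snd (hXm c))
  have hT : ∀ᵐ x ∂(Measure.pi fun _ : Fin (n + 2) => μ), ∀ i j l : Fin (n + 2), i ≠ j → l ≠ j →
      Rch μ Γ (x i) (x j) → Rch μ Γ (x j) (x l) → Rch μ Γ (x i) (x l) := by
    refine ae_all_iff.2 fun i => ae_all_iff.2 fun j => ae_all_iff.2 fun l => ?_
    by_cases hij : i = j
    · exact Eventually.of_forall fun x h => absurd hij h
    by_cases hlj : l = j
    · exact Eventually.of_forall fun x _ h => absurd hlj h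
    have := ae_triple μ hij hlj
      (p := fun q y => Rch μ Γ q.1 y → Rch μ Γ y q.2 → Rch μ Γ q.1 q.2)
      (fun q => Rch_trans μ Γ hm q.1 q.2) (by
        refine Measurable.imp ?_ (Measurable.imp ?_ ?_)
        · exact Rch_meas hm (by fun_prop) (by fun_prop)
        · exact Rch_meas hm (by fun_prop) (by fun_prop)
        · exact Rch_meas hm (by fun_prop) (by fun_prop))
    filter_upwards [this] with x hx _ _ using hx
  filter_upwards [hP, hT] with x hx1 hx2 hx3
  have hR : ∀ i, Rch μ Γ (x i) (x (i + 1)) := fun i => ⟨0, by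
    have h1 := (hΓ.2 (x i) (x (i + 1))).1
    have h2 := lt_of_le_of_ne h1 (hx3 i).symm
    simpa [ePow] using h2⟩
  have hM : ∀ i, ∃ c : I, x i ∈ X c ∧ x (i + 1) ∈ X c := fun i =>
    hx1 i ⟨hR i, cyc_rel (fun i j => Rch μ Γ (x i) (x j)) hR hx2 i⟩
  obtain ⟨c, hc, -⟩ := hM 0
  refine ⟨c, fun i => ?_⟩
  have : ∀ m : ℕ, x ((m : ℕ) : Fin (n + 2)) ∈ X c := by
    intro m
    induction m with
    | zero => simpa using hc
    | succ m ih =>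
      obtain ⟨d, hd1, hd2⟩ := hM (m : Fin (n + 2))
      have hcd : (c : ℕ) = d := by
        by_contra hne
        exact disjoint_left.1 (hXdisj (Or.inr c.2) (Or.inr d.2) hne) ih hd1
      rw [hcd]
      push_cast
      exact hd2
  simpa using this i

/-- Directed cycles are confined to strong components:
`t(C_k,Γ) = ∑_{i∈I} t(C_k, Γ⟦X_i⟧)` for every `k ≥ 2`. -/
theorem cycles_confined_to_strong_components
    {Ω : Type*} [MeasurableSpace Ω] (μ : Measure Ω) [IsProbabilityMeasure μ]
    (Γ : Ω → Ω → ℝ) (hΓ : IsDigraphon Γ)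
    (I : Set ℕ) (hI : 0 ∉ I) (X : ℕ → Set Ω)
    (hXmeas : ∀ i ∈ insert 0 I, MeasurableSet (X i))
    (hXdisj : (insert 0 I).PairwiseDisjoint X)
    (hXcover : (⋃ i ∈ insert 0 I, X i) = Set.univ)
    (hX0 : μ (X 0) = 0 ∨ Fragmented μ Γ (X 0))
    (hXcomp : ∀ i ∈ I, StrongComponent μ Γ (X i))
    (k : ℕ) (hk : 2 ≤ k) :
    cycleDensity μ Γ k = ∑' i : I, cycleDensity μ (kerRestrict Γ (X i)) k := by
  obtain ⟨n, rfl⟩ : ∃ n, k = n + 2 := ⟨k - 2, by omega⟩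
  have hm := hΓ.1
  have hXm : ∀ i : I, MeasurableSet (X i) := fun i => hXmeas i (Or.inr i.2)
  have hcyc := cycle_in_component μ Γ hΓ I X hXmeas hXdisj hXcover hX0 hXcomp n
  set f : (Fin (n + 2) → Ω) → ℝ := fun x => ∏ i, Γ (x i) (x (finRotate (n + 2) i)) with hf
  let E : I → Set (Fin (n + 2) → Ω) := fun c => {x | ∀ i, x i ∈ X c}
  have hEm : ∀ c, MeasurableSet (E c) := fun c => by
    have : E c = ⋂ i, (fun x : Fin (n + 2) → Ω => x i) ⁻¹' (X c) := by
      ext x; simp [E]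
    rw [this]
    exact MeasurableSet.iInter fun i => (measurable_pi_apply i) (hXm c)
  have hEd : Pairwise (Function.onFun Disjoint E) := by
    intro c d hcd
    refine disjoint_left.2 fun x hx hy => ?_
    exact disjoint_left.1 (hXdisj (Or.inr c.2) (Or.inr d.2) (fun h => hcd (Subtype.ext h)))
      (hx 0) (hy 0)
  have hfm : Measurable f := Finset.measurable_prod _ fun i _ =>
    hm.comp (f := fun x : Fin (n + 2) → Ω => (x i, x (finRotate (n + 2) i))) (by fun_prop)
  have hfi : Integrable f (Measure.pi fun _ => μ) := by
    refine Integrable.of_bound hfm.aestronglyMeasurable 1 (Eventually.of_forall fun x => ?_)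
    rw [Real.norm_eq_abs, abs_of_nonneg (Finset.prod_nonneg fun i _ => (hΓ.2 _ _).1)]
    exact Finset.prod_le_one (fun i _ => (hΓ.2 _ _).1) (fun i _ => (hΓ.2 _ _).2)
  have h1 : cycleDensity μ Γ (n + 2) = ∫ x in ⋃ c, E c, f x ∂(Measure.pi fun _ => μ) := by
    symm
    refine setIntegral_eq_integral_of_ae_compl_eq_zero ?_
    filter_upwards [hcyc] with x hx hxE
    by_contra hne
    apply hxE
    have := Finset.prod_ne_zero_iff.1 hne
    obtain ⟨c, hc⟩ := hx fun i => by simpa using this i (Finset.mem_univ i)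
    exact mem_iUnion.2 ⟨c, hc⟩
  rw [h1, integral_iUnion hEm hEd hfi.integrableOn]
  refine tsum_congr fun c => ?_
  rw [← integral_indicator (hEm c)]
  refine integral_congr_ae (Eventually.of_forall fun x => ?_)
  by_cases hx : x ∈ E c
  · simp only [indicator_of_mem hx, hf]
    refine Finset.prod_congr rfl fun i _ => ?_
    rw [kerRestrict, indicator_of_mem (mk_mem_prod (hx i) (hx _))]
    rfl
  · simp only [indicator_of_notMem hx]
    simp only [E, mem_ofPred_eq, not_forall] at hx
    obtain ⟨i, hi⟩ := hx
    symm
    refine Finset.prod_eq_zero (Finset.mem_univ i) ?_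
    simp [kerRestrict, hi]

end Digraphon
end
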